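/- (Full power is used at any optimum of the max-min-SINR problem.) Fix P > 0 and ε > 0. Suppose f* ∈ (ℂ^{N_t})^K together with some q* > 0 is feasible (power(f*) ≤ P, q* ≤ g(f*), C(q*) ≤ ε) and attains S(P, ε), and suppose S(P, ε) > 0. Then power(f*) = P. -/

import Mathlib

open Matrix Finset

noncomputable section

/-- `SINR_k(f) = |h_kᴴ f_k|² / (∑_{j≠k} |h_kᴴ f_j|² + σ²)`. -/
def SINR {Nt K : ℕ} (h : Fin K → Fin Nt → ℂ) (σ2 : ℝ)
    (f : Fin K → Fin Nt → ℂ) (k : Fin K) : ℝ :=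
  ‖star (h k) ⬝ᵥ f k‖ ^ 2 /
    ((∑ j ∈ Finset.univ.erase k, ‖star (h k) ⬝ᵥ f j‖ ^ 2) + σ2)

/-- `power(f) = ∑_k ‖f_k‖²`. -/
def power {Nt K : ℕ} (f : Fin K → Fin Nt → ℂ) : ℝ := ∑ k, ∑ i, ‖f k i‖ ^ 2

/-- `g(f) = ∑_k |aᵀ f_k|²`. -/
def gfun {Nt K : ℕ} (a : Fin Nt → ℂ) (f : Fin K → Fin Nt → ℂ) : ℝ :=
  ∑ k, ‖a ⬝ᵥ f k‖ ^ 2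

/-- The CRLB `C(q) = tr((Λ (q D) Λᵀ)⁻¹)`. -/
def Cq {N : ℕ} (Λ : Matrix (Fin 2) (Fin N) ℝ)
    (D : Matrix (Fin N) (Fin N) ℝ) (q : ℝ) : ℝ :=
  ((Λ * (q • D) * Λᵀ)⁻¹).trace

/-- Value set of the max-min-SINR problem `S(P, ε)`. -/
def Sfeas {Nt K N : ℕ} (h : Fin K → Fin Nt → ℂ) (a : Fin Nt → ℂ) (σ2 : ℝ)
    (Λ : Matrix (Fin 2) (Fin N) ℝ) (D : Matrix (Fin N) (Fin N) ℝ)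
    (P ε : ℝ) : Set ℝ :=
  {v | ∃ f : Fin K → Fin Nt → ℂ, power f ≤ P ∧
        (∃ q : ℝ, 0 < q ∧ q ≤ gfun a f ∧ Cq Λ D q ≤ ε) ∧
        v = ⨅ k, SINR h σ2 f k}

/-- `S(P, ε)`: the optimal value of the max-min-SINR problem. -/
def Sval {Nt K N : ℕ} (h : Fin K → Fin Nt → ℂ) (a : Fin Nt → ℂ) (σ2 : ℝ)
    (Λ : Matrix (Fin 2) (Fin N) ℝ) (D : Matrix (Fin N) (Fin N) ℝ)
    (P ε : ℝ) : ℝ :=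
  sSup (Sfeas h a σ2 Λ D P ε)

/-- Value set of the power-minimization problem `𝒫(η, P, ε)`. -/
def Pfeas {Nt K N : ℕ} (h : Fin K → Fin Nt → ℂ) (a : Fin Nt → ℂ) (σ2 : ℝ)
    (Λ : Matrix (Fin 2) (Fin N) ℝ) (D : Matrix (Fin N) (Fin N) ℝ)
    (η P ε : ℝ) : Set ℝ :=
  {v | ∃ f : Fin K → Fin Nt → ℂ, (∀ k, SINR h σ2 f k ≥ η) ∧
        (∃ q : ℝ, 0 < q ∧ q ≤ gfun a f ∧ Cq Λ D q ≤ ε) ∧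
        v = power f / P}

/-- `𝒫(η, P, ε)`: the optimal value of the power-minimization problem. -/
def Pval {Nt K N : ℕ} (h : Fin K → Fin Nt → ℂ) (a : Fin Nt → ℂ) (σ2 : ℝ)
    (Λ : Matrix (Fin 2) (Fin N) ℝ) (D : Matrix (Fin N) (Fin N) ℝ)
    (η P ε : ℝ) : ℝ :=
  sInf (Pfeas h a σ2 Λ D η P ε)

/-!
Scaling every beamformer by `c > 1` is the same, for the SINRs, as dividing the noise power by `c²`,
so it strictly increases every SINR that is positive; it also increases `g`, so the sensing
constraint is preserved. If an optimum left power unused, a slight scaling of this kind would still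
respect the power budget and would improve the worst SINR.
-/

theorem exists_one_lt_sq_mul_le {p P : ℝ} (hpP : p < P) : ∃ c : ℝ, 1 < c ∧ c ^ 2 * p ≤ P := by
  have hcont : Continuous fun c : ℝ ↦ c ^ 2 * p := by fun_prop
  have hnear : ∀ᶠ c in nhds (1 : ℝ), c ^ 2 * p < P :=
    hcont.continuousAt.eventually_lt_const (by simpa using hpP)
  obtain ⟨c, hcP, hc⟩ :=
    ((hnear.filter_mono nhdsWithin_le_nhds).and (eventually_mem_nhdsWithin (s := Set.Ioi 1))).exists
  exact ⟨c, hc, hcP.le⟩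

theorem norm_dotProduct_sq_le {ι R : Type*} [Fintype ι] [NonUnitalSeminormedRing R]
    (u v : ι → R) : ‖u ⬝ᵥ v‖ ^ 2 ≤ (∑ i, ‖u i‖ ^ 2) * ∑ i, ‖v i‖ ^ 2 :=
  calc ‖u ⬝ᵥ v‖ ^ 2 ≤ (∑ i, ‖u i‖ * ‖v i‖) ^ 2 := by
        gcongr
        exact norm_sum_le_of_le _ fun i _ ↦ norm_mul_le _ _
    _ ≤ (∑ i, ‖u i‖ ^ 2) * ∑ i, ‖v i‖ ^ 2 := sum_mul_sq_le_sq_mul_sq _ _ _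

variable {Nt K N : ℕ}

section Scaling

theorem power_smul (c : ℝ) (f : Fin K → Fin Nt → ℂ) : power (c • f) = c ^ 2 * power f := by
  simp only [power, Pi.smul_apply, norm_smul, mul_pow, Real.norm_eq_abs, sq_abs, mul_sum]

theorem gfun_nonneg (a : Fin Nt → ℂ) (f : Fin K → Fin Nt → ℂ) : 0 ≤ gfun a f :=
  sum_nonneg fun _ _ ↦ sq_nonneg _

theorem gfun_smul (a : Fin Nt → ℂ) (c : ℝ) (f : Fin K → Fin Nt → ℂ) :
    gfun a (c • f) = c ^ 2 * gfun a f := by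
  simp only [gfun, Pi.smul_apply, dotProduct_smul, norm_smul, mul_pow, Real.norm_eq_abs, sq_abs,
    mul_sum]

theorem SINR_smul (h : Fin K → Fin Nt → ℂ) (σ2 : ℝ) {c : ℝ} (hc : c ≠ 0)
    (f : Fin K → Fin Nt → ℂ) (k : Fin K) :
    SINR h σ2 (c • f) k = SINR h (σ2 / c ^ 2) f k := by
  have hc2 : c ^ 2 ≠ 0 := pow_ne_zero 2 hc
  simp only [SINR, Pi.smul_apply, dotProduct_smul, norm_smul, mul_pow, Real.norm_eq_abs, sq_abs,
    ← mul_sum]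
  rw [← mul_div_mul_left _ (_ + σ2 / c ^ 2) hc2, mul_add, mul_div_cancel₀ _ hc2]

end Scaling

section SINR

variable {h : Fin K → Fin Nt → ℂ} {σ2 : ℝ} {f : Fin K → Fin Nt → ℂ}

theorem interference_nonneg (k : Fin K) : 0 ≤ ∑ j ∈ univ.erase k, ‖star (h k) ⬝ᵥ f j‖ ^ 2 :=
  sum_nonneg fun _ _ ↦ sq_nonneg _

theorem SINR_lt_SINR_of_noise_lt {τ2 : ℝ} (hτ2 : 0 < τ2) (hτσ : τ2 < σ2) {k : Fin K}
    (hpos : 0 < SINR h σ2 f k) : SINR h σ2 f k < SINR h τ2 f k := by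
  have hsignal : 0 < ‖star (h k) ⬝ᵥ f k‖ ^ 2 :=
    (sq_nonneg _).lt_of_ne' (div_ne_zero_iff.mp hpos.ne').1
  exact div_lt_div_of_pos_left hsignal (add_pos_of_nonneg_of_pos (interference_nonneg k) hτ2)
    (by gcongr)

theorem SINR_lt_SINR_smul (hσ2 : 0 < σ2) {c : ℝ} (hc : 1 < c) {k : Fin K}
    (hpos : 0 < SINR h σ2 f k) : SINR h σ2 f k < SINR h σ2 (c • f) k := by
  have hc0 : 0 < c := one_pos.trans hc
  rw [SINR_smul h σ2 hc0.ne']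
  exact SINR_lt_SINR_of_noise_lt (by positivity) (div_lt_self hσ2 (one_lt_pow₀ hc two_ne_zero)) hpos

theorem norm_sq_le_power (f : Fin K → Fin Nt → ℂ) (k : Fin K) : ∑ i, ‖f k i‖ ^ 2 ≤ power f :=
  single_le_sum (f := fun j ↦ ∑ i, ‖f j i‖ ^ 2)
    (fun _ _ ↦ sum_nonneg fun _ _ ↦ sq_nonneg _) (mem_univ k)

theorem SINR_le (hσ2 : 0 < σ2) (k : Fin K) :
    SINR h σ2 f k ≤ (∑ i, ‖h k i‖ ^ 2) * power f / σ2 := by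
  have hsignal : ‖star (h k) ⬝ᵥ f k‖ ^ 2 ≤ (∑ i, ‖h k i‖ ^ 2) * power f :=
    calc ‖star (h k) ⬝ᵥ f k‖ ^ 2 ≤ (∑ i, ‖h k i‖ ^ 2) * ∑ i, ‖f k i‖ ^ 2 := by
          simpa only [Pi.star_apply, norm_star] using norm_dotProduct_sq_le (star (h k)) (f k)
      _ ≤ (∑ i, ‖h k i‖ ^ 2) * power f := by gcongr; exact norm_sq_le_power f k
  exact div_le_div₀ ((sq_nonneg _).trans hsignal) hsignal hσ2
    (le_add_of_nonneg_left (interference_nonneg k))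

end SINR

section MinSINR

/-- The objective `min_k SINR_k(f)` of the max-min-SINR problem, written as an infimum over the
users; without users (`K = 0`) it takes the value `0`. -/
def minSINR (h : Fin K → Fin Nt → ℂ) (σ2 : ℝ) (f : Fin K → Fin Nt → ℂ) : ℝ :=
  ⨅ k, SINR h σ2 f k

variable {h : Fin K → Fin Nt → ℂ} {σ2 : ℝ} {f : Fin K → Fin Nt → ℂ}

theorem minSINR_le_SINR (k : Fin K) : minSINR h σ2 f ≤ SINR h σ2 f k :=
  ciInf_le (Set.finite_range _).bddBelow k

theorem minSINR_lt_minSINR_smul [NeZero K] (hσ2 : 0 < σ2) {c : ℝ} (hc : 1 < c)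
    (hpos : 0 < minSINR h σ2 f) : minSINR h σ2 f < minSINR h σ2 (c • f) := by
  obtain ⟨k, hk⟩ := exists_eq_ciInf_of_finite (f := SINR h σ2 (c • f))
  calc minSINR h σ2 f ≤ SINR h σ2 f k := minSINR_le_SINR k
    _ < SINR h σ2 (c • f) k := SINR_lt_SINR_smul hσ2 hc (hpos.trans_le (minSINR_le_SINR k))
    _ = minSINR h σ2 (c • f) := hk

end MinSINR

section Sensing

/-- The beamformers meeting the sensing constraint of `S(P, ε)`: some `q > 0` with `q ≤ g(f)`
satisfies the Cramér–Rao requirement `C(q) ≤ ε`. The power budget is not part of it. -/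
def sensingFeasible (K : ℕ) (a : Fin Nt → ℂ) (Λ : Matrix (Fin 2) (Fin N) ℝ)
    (D : Matrix (Fin N) (Fin N) ℝ) (ε : ℝ) : Set (Fin K → Fin Nt → ℂ) :=
  {f | ∃ q : ℝ, 0 < q ∧ q ≤ gfun a f ∧ Cq Λ D q ≤ ε}

variable {h : Fin K → Fin Nt → ℂ} {a : Fin Nt → ℂ} {σ2 : ℝ} {Λ : Matrix (Fin 2) (Fin N) ℝ}
  {D : Matrix (Fin N) (Fin N) ℝ} {P ε : ℝ} {f : Fin K → Fin Nt → ℂ}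

theorem smul_mem_sensingFeasible {c : ℝ} (hc : 1 ≤ c) (hf : f ∈ sensingFeasible K a Λ D ε) :
    c • f ∈ sensingFeasible K a Λ D ε := by
  obtain ⟨q, hq, hqg, hqε⟩ := hf
  refine ⟨q, hq, hqg.trans ?_, hqε⟩
  rw [gfun_smul]
  exact le_mul_of_one_le_left (gfun_nonneg a f) (one_le_pow₀ hc)

theorem minSINR_mem_Sfeas (hf : f ∈ sensingFeasible K a Λ D ε) (hfP : power f ≤ P) :
    minSINR h σ2 f ∈ Sfeas h a σ2 Λ D P ε :=
  ⟨f, hfP, hf, rfl⟩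

theorem bddAbove_Sfeas [NeZero K] (hσ2 : 0 < σ2) : BddAbove (Sfeas h a σ2 Λ D P ε) := by
  refine ⟨(∑ i, ‖h 0 i‖ ^ 2) * P / σ2, ?_⟩
  rintro _ ⟨f, hfP, -, rfl⟩
  calc minSINR h σ2 f ≤ SINR h σ2 f 0 := minSINR_le_SINR 0
    _ ≤ (∑ i, ‖h 0 i‖ ^ 2) * power f / σ2 := SINR_le hσ2 0
    _ ≤ (∑ i, ‖h 0 i‖ ^ 2) * P / σ2 := by gcongr

theorem isMaxOn_minSINR_of_eq_Sval [NeZero K] (hσ2 : 0 < σ2)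
    (hf : minSINR h σ2 f = Sval h a σ2 Λ D P ε) :
    IsMaxOn (minSINR h σ2) {f ∈ sensingFeasible K a Λ D ε | power f ≤ P} f :=
  fun _ ⟨hsensing, hpower⟩ ↦
    (le_csSup (bddAbove_Sfeas hσ2) (minSINR_mem_Sfeas hsensing hpower)).trans_eq hf.symm

end Sensing

theorem full_power_at_optimum_general [NeZero K] {h : Fin K → Fin Nt → ℂ} {σ2 : ℝ} (hσ2 : 0 < σ2)
    {P : ℝ} {F : Set (Fin K → Fin Nt → ℂ)} (hF : ∀ c : ℝ, 1 < c → ∀ f ∈ F, c • f ∈ F)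
    {f : Fin K → Fin Nt → ℂ} (hfF : f ∈ F) (hfP : power f ≤ P)
    (hmax : IsMaxOn (minSINR h σ2) {f ∈ F | power f ≤ P} f) (hpos : 0 < minSINR h σ2 f) :
    power f = P := by
  by_contra hne
  obtain ⟨c, hc, hcP⟩ := exists_one_lt_sq_mul_le (hfP.lt_of_ne hne)
  have hfeasible : c • f ∈ {f ∈ F | power f ≤ P} := ⟨hF c hc f hfF, (power_smul c f).trans_le hcP⟩
  exact (minSINR_lt_minSINR_smul hσ2 hc hpos).not_ge (hmax hfeasible)

/-- full power is used at any optimum of the max-min-SINR problem: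
if `f*` (with some `q* > 0`) is feasible and attains `S(P, ε) > 0`, then `power(f*) = P`. -/
theorem full_power_at_optimum {Nt K N : ℕ} (hK : 0 < K)
    (h : Fin K → Fin Nt → ℂ) (a : Fin Nt → ℂ) (σ2 : ℝ) (hσ2 : 0 < σ2)
    (Λ : Matrix (Fin 2) (Fin N) ℝ) (D : Matrix (Fin N) (Fin N) ℝ)
    (hDdiag : D.IsDiag) (hDpd : D.PosDef) (hΛD : (Λ * D * Λᵀ).PosDef)
    (P ε : ℝ) (hP : 0 < P) (hε : 0 < ε)
    (fstar : Fin K → Fin Nt → ℂ) (qstar : ℝ)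
    (hfeas1 : power fstar ≤ P)
    (hfeas2 : 0 < qstar) (hfeas3 : qstar ≤ gfun a fstar) (hfeas4 : Cq Λ D qstar ≤ ε)
    (hopt : (⨅ k, SINR h σ2 fstar k) = Sval h a σ2 Λ D P ε)
    (hSpos : 0 < Sval h a σ2 Λ D P ε) :
    power fstar = P := by
  have : NeZero K := ⟨hK.ne'⟩
  exact full_power_at_optimum_general hσ2 (fun _ hc _ ↦ smul_mem_sensingFeasible hc.le)
    ⟨qstar, hfeas2, hfeas3, hfeas4⟩ hfeas1 (isMaxOn_minSINR_of_eq_Sval hσ2 hopt)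
    (hSpos.trans_eq hopt.symm)

end
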